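/- If the parameters satisfy 2β ≥ γ ≥ 1/2 and 0 ≤ α ≤ γ − 1/2 ≤ 1/2, and the local velocities and impulse satisfy the discrete contact conditions, then any step of the nonsmooth HHT scheme dissipates the algorithmic energy in the sense that H_{k+1} − H_k − W_ext − W_damp ≤ 0. -/

import Mathlib

open Matrix

/-!
The HHT balance is linear, so the balances at `k` and `k + 1` average, with weights `1 - γ` and `γ`,
to a balance between the weighted means. Testing it with the displacement increment turns forces
and damping into their discrete works. Every remaining term is then evaluated by the polarization
identity `(x - y)ᵀ A x_γ = (xᵀ A x - yᵀ A y) / 2 + (γ - 1/2) (x - y)ᵀ A (x - y)`, where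
`x_γ = γ x + (1 - γ) y`: the differences of squares assemble into the increment of the algorithmic
energy, and the remainders are quadratic forms which the parameter conditions make dissipative. The
only other contribution is the work `U_{k+1/2} · P_{k+1}` of the contact impulse, which is
nonpositive because `U_{k+1} = -e U_k` wherever an impulse acts.
-/

/-- The weighted mean `x_{k,γ} = γ x_{k+1} + (1 - γ) x_k` of consecutive values of a discrete
trajectory. The later value `x_{k+1}` is the first argument. -/
def weightedMean {R V : Type*} [Ring R] [AddCommGroup V] [Module R V] (γ : R) (x y : V) : V :=
  γ • x + (1 - γ) • y

section Polarization

variable {ι R : Type*} [Fintype ι] {A : Matrix ι ι R}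

theorem dotProduct_mulVec_comm_of_isSymm [CommSemiring R] (hA : A.IsSymm) (x y : ι → R) :
    x ⬝ᵥ A *ᵥ y = y ⬝ᵥ A *ᵥ x := by
  simpa only [hA.eq] using dotProduct_transpose_mulVec A x y

theorem add_dotProduct_mulVec_sub_of_isSymm [CommRing R] (hA : A.IsSymm) (x y : ι → R) :
    (x + y) ⬝ᵥ A *ᵥ (x - y) = x ⬝ᵥ A *ᵥ x - y ⬝ᵥ A *ᵥ y := by
  simp only [mulVec_sub, add_dotProduct, dotProduct_sub]
  rw [dotProduct_mulVec_comm_of_isSymm hA y x]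
  ring

theorem sub_dotProduct_mulVec_weightedMean [Field R] [CharZero R] (hA : A.IsSymm)
    (γ : R) (x y : ι → R) :
    (x - y) ⬝ᵥ A *ᵥ weightedMean γ x y
      = 1 / 2 * (x ⬝ᵥ A *ᵥ x - y ⬝ᵥ A *ᵥ y) + (γ - 1 / 2) * ((x - y) ⬝ᵥ A *ᵥ (x - y)) := by
  have mean_eq : weightedMean γ x y = (1 / 2 : R) • (x + y) + (γ - 1 / 2) • (x - y) := by
    unfold weightedMean
    module
  rw [mean_eq, mulVec_add, mulVec_smul, mulVec_smul, dotProduct_add, dotProduct_smul,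
    dotProduct_smul, dotProduct_mulVec_comm_of_isSymm hA (x - y) (x + y),
    add_dotProduct_mulVec_sub_of_isSymm hA, smul_eq_mul, smul_eq_mul]

end Polarization

/-- The Hilber–Hughes–Taylor balance of momentum between two consecutive levels, in which the
internal and external forces are shifted by `α` towards the earlier level `(q₀, v₀, F₀)`, whereas
the inertial force is taken at the later level `(q₁, v₁, F₁)`. -/
def HHTBalance {ι R : Type*} [Fintype ι] [CommRing R] (α : R) (M K C : Matrix ι ι R)
    (q₀ v₀ F₀ q₁ v₁ F₁ a₁ : ι → R) : Prop :=
  M *ᵥ a₁ + (1 - α) • (K *ᵥ q₁ + C *ᵥ v₁) + α • (K *ᵥ q₀ + C *ᵥ v₀) = (1 - α) • F₁ + α • F₀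

/-- The discrete work `W_ext` of the external forces along the displacement increment `d`. -/
def externalWork {ι R : Type*} [Fintype ι] [CommRing R] (γ α : R)
    (d F₀ F₁ F₂ : ι → R) : R :=
  d ⬝ᵥ ((1 - α) • weightedMean γ F₂ F₁ + α • weightedMean γ F₁ F₀)

/-- The discrete work `W_damp` of the damping forces along the displacement increment `d`. -/
def dampingWork {ι R : Type*} [Fintype ι] [CommRing R] (γ α : R)
    (C : Matrix ι ι R) (d v₀ v₁ v₂ : ι → R) : R :=
  -(d ⬝ᵥ C *ᵥ ((1 - α) • weightedMean γ v₂ v₁ + α • weightedMean γ v₁ v₀))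

namespace HHTBalance

variable {ι R : Type*} [Fintype ι] [CommRing R] {α : R} {M K C : Matrix ι ι R}
  {q₀ q₁ q₂ v₀ v₁ v₂ F₀ F₁ F₂ a₁ a₂ : ι → R}

theorem mean (balance₁ : HHTBalance α M K C q₀ v₀ F₀ q₁ v₁ F₁ a₁)
    (balance₂ : HHTBalance α M K C q₁ v₁ F₁ q₂ v₂ F₂ a₂) (γ : R) :
    HHTBalance α M K C (weightedMean γ q₁ q₀) (weightedMean γ v₁ v₀) (weightedMean γ F₁ F₀)
      (weightedMean γ q₂ q₁) (weightedMean γ v₂ v₁) (weightedMean γ F₂ F₁)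
      (weightedMean γ a₂ a₁) := by
  unfold HHTBalance at *
  simp only [weightedMean, mulVec_add, mulVec_smul]
  linear_combination (norm := module) γ • balance₂ + (1 - γ) • balance₁

theorem inertial_add_elastic_work (balance₁ : HHTBalance α M K C q₀ v₀ F₀ q₁ v₁ F₁ a₁)
    (balance₂ : HHTBalance α M K C q₁ v₁ F₁ q₂ v₂ F₂ a₂) (γ : R) (d : ι → R) :
    d ⬝ᵥ M *ᵥ weightedMean γ a₂ a₁
        + d ⬝ᵥ K *ᵥ ((1 - α) • weightedMean γ q₂ q₁ + α • weightedMean γ q₁ q₀)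
      = externalWork γ α d F₀ F₁ F₂ + dampingWork γ α C d v₀ v₁ v₂ := by
  have tested := congrArg (d ⬝ᵥ ·) (balance₁.mean balance₂ γ)
  simp only [externalWork, dampingWork, mulVec_add, mulVec_smul, dotProduct_add,
    dotProduct_smul, smul_eq_mul] at tested ⊢
  linear_combination tested

end HHTBalance

/-- The nonsmooth Newmark kinematics leading from `(q₁, v₁, a₁)` to `(q₂, v₂, a₂)` in a time step
`h`. The vector `w` is the velocity jump caused by the impulse. -/
structure IsNewmarkStep {R V : Type*} [Field R] [AddCommGroup V] [Module R V] (h γ β : R)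
    (q₁ v₁ a₁ q₂ v₂ a₂ w : V) : Prop where
  velocity_eq : v₂ = v₁ + (h * (1 - γ)) • a₁ + (h * γ) • a₂ + w
  position_eq :
    q₂ = q₁ + h • v₁ + (h ^ 2 * (1 / 2 - β)) • a₁ + (h ^ 2 * β) • a₂ + (h / 2) • w

namespace IsNewmarkStep

variable {R V : Type*} [Field R] [AddCommGroup V] [Module R V] {h γ β : R}
  {q₁ v₁ a₁ q₂ v₂ a₂ w : V}

theorem smul_weightedMean_eq (step : IsNewmarkStep h γ β q₁ v₁ a₁ q₂ v₂ a₂ w) :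
    h • weightedMean γ a₂ a₁ = v₂ - v₁ - w := by
  rw [step.velocity_eq, weightedMean]
  module

theorem position_sub_eq [CharZero R] (step : IsNewmarkStep h γ β q₁ v₁ a₁ q₂ v₂ a₂ w) :
    q₂ - q₁ = (h / 2) • (v₂ + v₁) + (h ^ 2 / 2 * (2 * β - γ)) • (a₂ - a₁) := by
  rw [step.position_eq, step.velocity_eq]
  module

end IsNewmarkStep

section Energy

variable {ι R : Type*} [Fintype ι] [Field R]

/-- The total mechanical energy `E(q, v)`. -/
def mechanicalEnergy (M K : Matrix ι ι R) (q v : ι → R) : R :=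
  1 / 2 * (v ⬝ᵥ M *ᵥ v) + 1 / 2 * (q ⬝ᵥ K *ᵥ q)

/-- The algorithmic energy `H₁` at the level `(q₁, v₁, a₁)`, where `q₀` is the preceding position:
the mechanical energy, corrected by a term in the acceleration and one in
`z₁ = (q₁ - q₀) / 2`. -/
def algorithmicEnergy (h γ β α : R) (M K : Matrix ι ι R) (q₀ q₁ v₁ a₁ : ι → R) : R :=
  mechanicalEnergy M K q₁ v₁ + h ^ 2 / 4 * (2 * β - γ) * (a₁ ⬝ᵥ M *ᵥ a₁)
    + 2 * α * (1 - γ) * (((1 / 2 : R) • (q₁ - q₀)) ⬝ᵥ K *ᵥ ((1 / 2 : R) • (q₁ - q₀)))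

end Energy

section EnergyBalance

variable {ι R : Type*} [Fintype ι] [Field R] [CharZero R]

theorem elastic_work_eq {K : Matrix ι ι R} (hK : K.IsSymm) (γ α : R) (q₀ q₁ q₂ : ι → R) :
    (q₂ - q₁) ⬝ᵥ K *ᵥ ((1 - α) • weightedMean γ q₂ q₁ + α • weightedMean γ q₁ q₀)
      = 1 / 2 * (q₂ ⬝ᵥ K *ᵥ q₂ - q₁ ⬝ᵥ K *ᵥ q₁)
        + α * (1 - γ) / 2 * ((q₂ - q₁) ⬝ᵥ K *ᵥ (q₂ - q₁) - (q₁ - q₀) ⬝ᵥ K *ᵥ (q₁ - q₀))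
        + (γ - 1 / 2 - α) * ((q₂ - q₁) ⬝ᵥ K *ᵥ (q₂ - q₁))
        + α * (1 - γ) / 2 * ((q₂ - q₁ - (q₁ - q₀)) ⬝ᵥ K *ᵥ (q₂ - q₁ - (q₁ - q₀))) := by
  set d₂ := q₂ - q₁ with hd₂
  set d₁ := q₁ - q₀ with hd₁
  have shifted_mean : (1 - α) • weightedMean γ q₂ q₁ + α • weightedMean γ q₁ q₀
      = weightedMean γ q₂ q₁ - α • weightedMean γ d₂ d₁ := by
    simp only [weightedMean, hd₂, hd₁]
    module
  have increment_mean : d₂ ⬝ᵥ K *ᵥ weightedMean γ d₂ d₁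
      = d₂ ⬝ᵥ K *ᵥ d₂ - (1 - γ) * ((d₂ - d₁) ⬝ᵥ K *ᵥ d₂) := by
    rw [dotProduct_mulVec_comm_of_isSymm hK (d₂ - d₁)]
    simp only [weightedMean, mulVec_add, mulVec_sub, mulVec_smul, dotProduct_add, dotProduct_sub,
      dotProduct_smul, smul_eq_mul]
    ring
  have position_part := sub_dotProduct_mulVec_weightedMean hK γ q₂ q₁
  have increment_part := sub_dotProduct_mulVec_weightedMean hK 1 d₂ d₁
  rw [show weightedMean (1 : R) d₂ d₁ = d₂ by simp [weightedMean]] at increment_part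
  rw [shifted_mean, mulVec_sub, mulVec_smul, dotProduct_sub, dotProduct_smul, smul_eq_mul]
  linear_combination position_part - α * increment_mean + α * (1 - γ) * increment_part

theorem IsNewmarkStep.inertial_work_eq {M : Matrix ι ι R} (hM : M.IsSymm) {h γ β : R}
    {q₁ v₁ a₁ q₂ v₂ a₂ w : ι → R} (step : IsNewmarkStep h γ β q₁ v₁ a₁ q₂ v₂ a₂ w) :
    (q₂ - q₁) ⬝ᵥ M *ᵥ weightedMean γ a₂ a₁
      = 1 / 2 * (v₂ ⬝ᵥ M *ᵥ v₂ - v₁ ⬝ᵥ M *ᵥ v₁)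
        + h ^ 2 / 4 * (2 * β - γ) * (a₂ ⬝ᵥ M *ᵥ a₂ - a₁ ⬝ᵥ M *ᵥ a₁)
        + h ^ 2 / 2 * (2 * β - γ) * (γ - 1 / 2) * ((a₂ - a₁) ⬝ᵥ M *ᵥ (a₂ - a₁))
        - 1 / 2 * ((v₂ + v₁) ⬝ᵥ M *ᵥ w) := by
  have velocity_part : h * ((v₂ + v₁) ⬝ᵥ M *ᵥ weightedMean γ a₂ a₁)
      = v₂ ⬝ᵥ M *ᵥ v₂ - v₁ ⬝ᵥ M *ᵥ v₁ - (v₂ + v₁) ⬝ᵥ M *ᵥ w := by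
    rw [← smul_eq_mul, ← dotProduct_smul, ← mulVec_smul, step.smul_weightedMean_eq, mulVec_sub,
      dotProduct_sub, add_dotProduct_mulVec_sub_of_isSymm hM]
  have acceleration_part := sub_dotProduct_mulVec_weightedMean hM γ a₂ a₁
  rw [step.position_sub_eq, add_dotProduct, smul_dotProduct, smul_dotProduct, smul_eq_mul,
    smul_eq_mul]
  linear_combination 1 / 2 * velocity_part + h ^ 2 / 2 * (2 * β - γ) * acceleration_part

theorem IsNewmarkStep.energy_balance {h γ β α : R} {M K C : Matrix ι ι R} (hM : M.IsSymm)
    (hK : K.IsSymm) {q₀ q₁ q₂ v₀ v₁ v₂ a₁ a₂ F₀ F₁ F₂ w : ι → R}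
    (step : IsNewmarkStep h γ β q₁ v₁ a₁ q₂ v₂ a₂ w)
    (balance₁ : HHTBalance α M K C q₀ v₀ F₀ q₁ v₁ F₁ a₁)
    (balance₂ : HHTBalance α M K C q₁ v₁ F₁ q₂ v₂ F₂ a₂) :
    algorithmicEnergy h γ β α M K q₁ q₂ v₂ a₂ - algorithmicEnergy h γ β α M K q₀ q₁ v₁ a₁
        - externalWork γ α (q₂ - q₁) F₀ F₁ F₂ - dampingWork γ α C (q₂ - q₁) v₀ v₁ v₂
      = 1 / 2 * ((v₂ + v₁) ⬝ᵥ M *ᵥ w)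
        - h ^ 2 / 2 * (2 * β - γ) * (γ - 1 / 2) * ((a₂ - a₁) ⬝ᵥ M *ᵥ (a₂ - a₁))
        - (γ - 1 / 2 - α) * ((q₂ - q₁) ⬝ᵥ K *ᵥ (q₂ - q₁))
        - α * (1 - γ) / 2 * ((q₂ - q₁ - (q₁ - q₀)) ⬝ᵥ K *ᵥ (q₂ - q₁ - (q₁ - q₀))) := by
  simp only [algorithmicEnergy, mechanicalEnergy, mulVec_smul, dotProduct_smul, smul_dotProduct,
    smul_eq_mul]
  linear_combination balance₁.inertial_add_elastic_work balance₂ γ (q₂ - q₁)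
    - step.inertial_work_eq hM - elastic_work_eq hK γ α q₀ q₁ q₂

end EnergyBalance

theorem contact_work_nonpos {κ R : Type*} [Fintype κ] [CommRing R] [PartialOrder R]
    [IsOrderedRing R] {e U U' P : κ → R} {I : Set κ} (he : ∀ i ∈ I, e i ≤ 1)
    (hP : ∀ i ∉ I, P i = 0)
    (hc : ∀ i ∈ I, U i ≤ 0 ∧ 0 ≤ P i ∧ (U' i + e i * U i) * P i = 0) :
    (U' + U) ⬝ᵥ P ≤ 0 := by
  refine Finset.sum_nonpos fun i _ ↦ ?_
  by_cases hi : i ∈ I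
  · obtain ⟨approaching, impulse_nonneg, complementarity⟩ := hc i hi
    calc (U' i + U i) * P i = (1 - e i) * U i * P i := by linear_combination complementarity
      _ ≤ 0 := mul_nonpos_of_nonpos_of_nonneg
        (mul_nonpos_of_nonneg_of_nonpos (sub_nonneg.2 (he i hi)) approaching) impulse_nonneg
  · rw [hP i hi, mul_zero]

theorem nonsmooth_HHT_dissipates_general {ι κ : Type*} [Fintype ι] [Fintype κ] {h γ β α : ℝ}
    {M K C : Matrix ι ι ℝ} {G : Matrix ι κ ℝ} (hM : M.PosSemidef) (hK : K.PosSemidef)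
    {q₀ q₁ q₂ v₀ v₁ v₂ a₁ a₂ F₀ F₁ F₂ w : ι → ℝ} {P : κ → ℝ}
    (balance₁ : HHTBalance α M K C q₀ v₀ F₀ q₁ v₁ F₁ a₁)
    (balance₂ : HHTBalance α M K C q₁ v₁ F₁ q₂ v₂ F₂ a₂)
    (hw : M *ᵥ w = G *ᵥ P) (step : IsNewmarkStep h γ β q₁ v₁ a₁ q₂ v₂ a₂ w)
    {e : κ → ℝ} {I : Set κ} (he : ∀ i ∈ I, e i ≤ 1) (hP : ∀ i ∉ I, P i = 0)
    (hc : ∀ i ∈ I, (Gᵀ *ᵥ v₁) i ≤ 0 ∧ 0 ≤ P i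
      ∧ ((Gᵀ *ᵥ v₂) i + e i * (Gᵀ *ᵥ v₁) i) * P i = 0)
    (hβ : γ ≤ 2 * β) (hα : 0 ≤ α) (hαγ : α ≤ γ - 1 / 2) (hγ : γ ≤ 1) :
    algorithmicEnergy h γ β α M K q₁ q₂ v₂ a₂ - algorithmicEnergy h γ β α M K q₀ q₁ v₁ a₁
      - externalWork γ α (q₂ - q₁) F₀ F₁ F₂ - dampingWork γ α C (q₂ - q₁) v₀ v₁ v₂ ≤ 0 := by
  have impact : (v₂ + v₁) ⬝ᵥ M *ᵥ w ≤ 0 := by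
    rw [hw, dotProduct_mulVec, ← mulVec_transpose, mulVec_add]
    exact contact_work_nonpos he hP hc
  have acceleration_dissipation :
      0 ≤ h ^ 2 / 2 * (2 * β - γ) * (γ - 1 / 2) * ((a₂ - a₁) ⬝ᵥ M *ᵥ (a₂ - a₁)) :=
    mul_nonneg (mul_nonneg (mul_nonneg (by positivity) (by linarith)) (by linarith))
      (hM.dotProduct_mulVec_nonneg _)
  have displacement_dissipation :
      0 ≤ (γ - 1 / 2 - α) * ((q₂ - q₁) ⬝ᵥ K *ᵥ (q₂ - q₁)) :=
    mul_nonneg (by linarith) (hK.dotProduct_mulVec_nonneg _)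
  have increment_dissipation :
      0 ≤ α * (1 - γ) / 2 * ((q₂ - q₁ - (q₁ - q₀)) ⬝ᵥ K *ᵥ (q₂ - q₁ - (q₁ - q₀))) :=
    mul_nonneg (div_nonneg (mul_nonneg hα (by linarith)) zero_le_two)
      (hK.dotProduct_mulVec_nonneg _)
  rw [step.energy_balance (isHermitian_iff_isSymm.1 hM.isHermitian)
    (isHermitian_iff_isSymm.1 hK.isHermitian) balance₁ balance₂]
  linarith

/-- The nonsmooth HHT scheme dissipates the algorithmic energy when
`2β ≥ γ ≥ 1/2` and `0 ≤ α ≤ γ − 1/2 ≤ 1/2`, under the discrete contact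
conditions. -/
theorem nonsmooth_HHT_dissipates
    (n m : ℕ) (hn : 1 ≤ n) (hm : 1 ≤ m)
    (h γ β α : ℝ) (hh : 0 < h)
    (M K C : Matrix (Fin n) (Fin n) ℝ) (G : Matrix (Fin n) (Fin m) ℝ)
    (hM : M.PosDef) (hK : K.PosSemidef)
    (qkm1 qk qk1 vkm1 vk vk1 ak ak1 Fkm1 Fk Fk1 w : Fin n → ℝ)
    (P : Fin m → ℝ)
    (hbalk : M.mulVec ak + (1 - α) • (K.mulVec qk + C.mulVec vk)
        + α • (K.mulVec qkm1 + C.mulVec vkm1) = (1 - α) • Fk + α • Fkm1)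
    (hbalk1 : M.mulVec ak1 + (1 - α) • (K.mulVec qk1 + C.mulVec vk1)
        + α • (K.mulVec qk + C.mulVec vk) = (1 - α) • Fk1 + α • Fk)
    (hw : M.mulVec w = G.mulVec P)
    (hv : vk1 = vk + (h * (1 - γ)) • ak + (h * γ) • ak1 + w)
    (hq : qk1 = qk + h • vk + (h ^ 2 * (1/2 - β)) • ak + (h ^ 2 * β) • ak1
        + (h / 2) • w)
    (e : Fin m → ℝ) (I₁ : Finset (Fin m))
    (he : ∀ i, 0 ≤ e i ∧ e i ≤ 1)
    (hPout : ∀ i ∉ I₁, P i = 0)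
    (hc : ∀ i ∈ I₁, Gᵀ.mulVec vk i ≤ 0
        ∧ 0 ≤ Gᵀ.mulVec vk1 i + e i * Gᵀ.mulVec vk i
        ∧ 0 ≤ P i
        ∧ (Gᵀ.mulVec vk1 i + e i * Gᵀ.mulVec vk i) * P i = 0)
    (hβ : γ ≤ 2 * β) (hγ : 1/2 ≤ γ)
    (hα0 : 0 ≤ α) (hαγ : α ≤ γ - 1/2) (hγ1 : γ - 1/2 ≤ 1/2) :
    (1/2 * (vk1 ⬝ᵥ M.mulVec vk1) + 1/2 * (qk1 ⬝ᵥ K.mulVec qk1)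
        + h ^ 2 / 4 * (2 * β - γ) * (ak1 ⬝ᵥ M.mulVec ak1)
        + 2 * α * (1 - γ) * (((1/2 : ℝ) • (qk1 - qk)) ⬝ᵥ K.mulVec ((1/2 : ℝ) • (qk1 - qk))))
      - (1/2 * (vk ⬝ᵥ M.mulVec vk) + 1/2 * (qk ⬝ᵥ K.mulVec qk)
        + h ^ 2 / 4 * (2 * β - γ) * (ak ⬝ᵥ M.mulVec ak)
        + 2 * α * (1 - γ) * (((1/2 : ℝ) • (qk - qkm1)) ⬝ᵥ K.mulVec ((1/2 : ℝ) • (qk - qkm1))))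
      - (qk1 - qk) ⬝ᵥ ((1 - α) • (γ • Fk1 + (1 - γ) • Fk) + α • (γ • Fk + (1 - γ) • Fkm1))
      - (-((qk1 - qk) ⬝ᵥ C.mulVec ((1 - α) • (γ • vk1 + (1 - γ) • vk)
          + α • (γ • vk + (1 - γ) • vkm1)))) ≤ 0 := by
  exact nonsmooth_HHT_dissipates_general hM.posSemidef hK hbalk hbalk1 hw ⟨hv, hq⟩
    (fun i _ ↦ (he i).2) hPout
    (fun i hi ↦ ⟨(hc i hi).1, (hc i hi).2.2⟩) hβ hα0 hαγ (by linarith)
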